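/- arXiv:1608.05973 — 3 statements merged into one kernel-verified Lean document; each statement's English description precedes it below -/
import Mathlib

section
/- Let d ≥ 1, let H : ℝ^d → ℝ be smooth, let D : ℝ^d → (d×d real matrices) be a smooth matrix-valued map with D(z) symmetric for every z, and let Q : ℝ^d → (d×d real matrices) be a smooth matrix-valued map with Q(z) skew-symmetric (Q(z)ᵀ = -Q(z)) for every z. Define the drift f : ℝ^d → ℝ^d by f_i(z) = -∑_{j=1}^d (D_{ij}(z) + Q_{ij}(z)) ∂H/∂z_j (z) + ∑_{j=1}^d ∂/∂z_j (D_{ij}(z) + Q_{ij}(z)). Then for every smooth function p : ℝ^d → ℝ and every z ∈ ℝ^d, the Itô Fokker–Planck right-hand side equals the compact form: ∑_{i,j=1}^d ∂²/∂z_i∂z_j [D_{ij}(z) p(z)] - ∑_{i=1}^d ∂/∂z_i [f_i(z) p(z)] = ∑_{i=1}^d ∂/∂z_i ( ∑_{j=1}^d (D_{ij}(z) + Q_{ij}(z)) [ p(z) ∂H/∂z_j(z) + ∂p/∂z_j(z) ] ). -/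
open scoped BigOperators
open Matrix

/-- Classical partial derivative in the `i`-th coordinate direction. -/
noncomputable def pd {ι : Type*} [Fintype ι] [DecidableEq ι]
    (i : ι) (f : (ι → ℝ) → ℝ) (z : ι → ℝ) : ℝ :=
  fderiv ℝ f z (Pi.single i 1)

/-!
Write `A = D + Q`. By the product rule,
`∑ⱼ Aᵢⱼ (p ∂ⱼH + ∂ⱼp) = ∑ⱼ ∂ⱼ(p Aᵢⱼ) - fᵢ p`,
so the compact form is the Itô form with `A` in place of `D` in the second-order term. The
difference of the two is `∑ᵢⱼ ∂ᵢ∂ⱼ(p Qᵢⱼ)`, which vanishes because `∂ᵢ∂ⱼ` is symmetric and `Qᵢⱼ`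
skew-symmetric in `i` and `j`.
-/

section PartialDerivatives

variable {ι : Type*} [Fintype ι] [DecidableEq ι] {f g : (ι → ℝ) → ℝ} {z : ι → ℝ}

theorem pd_add (i : ι) (hf : DifferentiableAt ℝ f z) (hg : DifferentiableAt ℝ g z) :
    pd i (fun w => f w + g w) z = pd i f z + pd i g z := by
  simp only [pd, fderiv_fun_add hf hg, _root_.add_apply]

theorem pd_sub (i : ι) (hf : DifferentiableAt ℝ f z) (hg : DifferentiableAt ℝ g z) :
    pd i (fun w => f w - g w) z = pd i f z - pd i g z := by
  simp only [pd, fderiv_fun_sub hf hg, _root_.sub_apply]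

theorem pd_neg (i : ι) (f : (ι → ℝ) → ℝ) (z : ι → ℝ) :
    pd i (fun w => -f w) z = -pd i f z := by
  simp only [pd, fderiv_fun_neg, _root_.neg_apply]

theorem pd_mul (i : ι) (hf : DifferentiableAt ℝ f z) (hg : DifferentiableAt ℝ g z) :
    pd i (fun w => f w * g w) z = f z * pd i g z + g z * pd i f z := by
  simp only [pd, fderiv_fun_mul hf hg, _root_.add_apply, _root_.smul_apply, smul_eq_mul]

theorem pd_sum {κ : Type*} {s : Finset κ} {F : κ → (ι → ℝ) → ℝ} (i : ι)
    (hF : ∀ k ∈ s, DifferentiableAt ℝ (F k) z) :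
    pd i (fun w => ∑ k ∈ s, F k w) z = ∑ k ∈ s, pd i (F k) z := by
  simp only [pd, fderiv_fun_sum hF, _root_.sum_apply]

theorem differentiableAt_pd (i : ι) (hf : ContDiffAt ℝ 2 f z) :
    DifferentiableAt ℝ (pd i f) z :=
  ((hf.fderiv_right (m := 1) one_add_one_eq_two.le).differentiableAt one_ne_zero).clm_apply
    (differentiableAt_const _)

theorem pd_pd_eq_fderiv_fderiv (i j : ι) (hf : ContDiffAt ℝ 2 f z) :
    pd i (pd j f) z = fderiv ℝ (fderiv ℝ f) z (Pi.single i 1) (Pi.single j 1) := by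
  have hf' : DifferentiableAt ℝ (fderiv ℝ f) z :=
    (hf.fderiv_right (m := 1) one_add_one_eq_two.le).differentiableAt one_ne_zero
  change fderiv ℝ (fun w => fderiv ℝ f w (Pi.single j 1)) z (Pi.single i 1) = _
  simp [fderiv_clm_apply hf' (differentiableAt_const _)]

theorem pd_comm (i j : ι) (hf : ContDiffAt ℝ 2 f z) : pd i (pd j f) z = pd j (pd i f) z := by
  rw [pd_pd_eq_fderiv_fderiv i j hf, pd_pd_eq_fderiv_fderiv j i hf]
  exact hf.isSymmSndFDerivAt minSmoothness_of_isRCLikeNormedField.le _ _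

end PartialDerivatives

section DoubleDivergence

variable {ι : Type*} [Fintype ι] [DecidableEq ι]

/-- The double divergence `∑ᵢⱼ ∂ᵢ∂ⱼ Aᵢⱼ` of a matrix field: the second-order part of the Itô
Fokker–Planck operator is `p ↦ doubleDivergence (p • D)`. -/
noncomputable def doubleDivergence (A : (ι → ℝ) → Matrix ι ι ℝ) (z : ι → ℝ) : ℝ :=
  ∑ i, ∑ j, pd i (pd j fun w => A w i j) z

theorem doubleDivergence_add {A B : (ι → ℝ) → Matrix ι ι ℝ}
    (hA : ∀ i j, ContDiff ℝ 2 fun w => A w i j) (hB : ∀ i j, ContDiff ℝ 2 fun w => B w i j)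
    (z : ι → ℝ) :
    doubleDivergence (fun w => A w + B w) z = doubleDivergence A z + doubleDivergence B z := by
  have pd_entry_add (i j : ι) :
      pd j (fun w => (A w + B w) i j) =
        fun w => pd j (fun u => A u i j) w + pd j (fun u => B u i j) w :=
    funext fun _ => pd_add j ((hA i j).differentiable two_ne_zero _)
      ((hB i j).differentiable two_ne_zero _)
  simp only [doubleDivergence, ← Finset.sum_add_distrib]
  refine Finset.sum_congr rfl fun i _ => Finset.sum_congr rfl fun j _ => ?_
  rw [pd_entry_add, pd_add i (differentiableAt_pd j (hA i j).contDiffAt)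
    (differentiableAt_pd j (hB i j).contDiffAt)]

theorem doubleDivergence_transpose {A : (ι → ℝ) → Matrix ι ι ℝ} {z : ι → ℝ}
    (hA : ∀ i j, ContDiffAt ℝ 2 (fun w => A w i j) z) :
    doubleDivergence (fun w => (A w)ᵀ) z = doubleDivergence A z := by
  simp only [doubleDivergence, transpose_apply]
  rw [Finset.sum_comm]
  exact Finset.sum_congr rfl fun i _ => Finset.sum_congr rfl fun j _ => pd_comm j i (hA i j)

theorem doubleDivergence_neg (A : (ι → ℝ) → Matrix ι ι ℝ) (z : ι → ℝ) :
    doubleDivergence (fun w => -A w) z = -doubleDivergence A z := by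
  have pd_entry_neg (i j : ι) :
      pd j (fun w => (-A w) i j) = fun w => -pd j (fun u => A u i j) w :=
    funext fun w => pd_neg j (fun u => A u i j) w
  simp only [doubleDivergence, pd_entry_neg, pd_neg, Finset.sum_neg_distrib]

theorem doubleDivergence_eq_zero_of_transpose_eq_neg {A : (ι → ℝ) → Matrix ι ι ℝ} {z : ι → ℝ}
    (hA : ∀ i j, ContDiffAt ℝ 2 (fun w => A w i j) z) (hskew : ∀ w, (A w)ᵀ = -A w) :
    doubleDivergence A z = 0 := by
  have eq_neg_self : doubleDivergence A z = -doubleDivergence A z := by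
    rw [← doubleDivergence_neg, ← funext hskew, doubleDivergence_transpose hA]
  exact self_eq_neg.mp eq_neg_self

end DoubleDivergence

section CompleteRecipe

variable {ι : Type*} [Fintype ι] [DecidableEq ι]

/-- The drift `-A ∇H + Γ`, `Γᵢ = ∑ⱼ ∂ⱼ Aᵢⱼ`, of the complete recipe, with `A = D + Q` the sum of
the diffusion matrix and the curl matrix. -/
noncomputable def recipeDrift (A : (ι → ℝ) → Matrix ι ι ℝ) (H : (ι → ℝ) → ℝ) (z : ι → ℝ)
    (i : ι) : ℝ :=
  -∑ j, A z i j * pd j H z + ∑ j, pd j (fun w => A w i j) z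

/-- The vector field `A (p ∇H + ∇p)` of the compact form: the probability current of the density
`p` with the opposite sign, so that the Fokker–Planck equation reads `∂ₜp = ∑ᵢ ∂ᵢ recipeFluxᵢ`. -/
noncomputable def recipeFlux (A : (ι → ℝ) → Matrix ι ι ℝ) (H p : (ι → ℝ) → ℝ) (z : ι → ℝ)
    (i : ι) : ℝ :=
  ∑ j, A z i j * (p z * pd j H z + pd j p z)

variable {A : (ι → ℝ) → Matrix ι ι ℝ} {H p : (ι → ℝ) → ℝ} {z : ι → ℝ} {i : ι}

theorem differentiableAt_recipeDrift (hA : ∀ j, ContDiffAt ℝ 2 (fun w => A w i j) z)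
    (hH : ContDiffAt ℝ 2 H z) : DifferentiableAt ℝ (fun w => recipeDrift A H w i) z := by
  have drift_term (j : ι) : DifferentiableAt ℝ (fun w => A w i j * pd j H w) z :=
    ((hA j).differentiableAt two_ne_zero).mul (differentiableAt_pd j hH)
  exact (DifferentiableAt.fun_sum fun j _ => drift_term j).neg.add
    (DifferentiableAt.fun_sum fun j _ => differentiableAt_pd j (hA j))

theorem recipeFlux_eq_sum_pd_sub_recipeDrift_mul
    (hA : ∀ j, DifferentiableAt ℝ (fun w => A w i j) z) (hp : DifferentiableAt ℝ p z) :
    recipeFlux A H p z i = ∑ j, pd j (fun w => p w * A w i j) z - recipeDrift A H z i * p z := by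
  simp only [recipeFlux, recipeDrift, add_mul, neg_mul, Finset.sum_mul, pd_mul _ hp (hA _),
    ← Finset.sum_neg_distrib, ← Finset.sum_add_distrib, ← Finset.sum_sub_distrib]
  exact Finset.sum_congr rfl fun j _ => by ring

theorem pd_recipeFlux (k : ι) (hA : ∀ j, ContDiff ℝ 2 fun w => A w i j) (hH : ContDiffAt ℝ 2 H z)
    (hp : ContDiff ℝ 2 p) :
    pd k (fun w => recipeFlux A H p w i) z =
      ∑ j, pd k (pd j fun w => p w * A w i j) z - pd k (fun w => recipeDrift A H w i * p w) z := by
  have flux_eq : (fun w => recipeFlux A H p w i) =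
      fun w => ∑ j, pd j (fun u => p u * A u i j) w - recipeDrift A H w i * p w :=
    funext fun w => recipeFlux_eq_sum_pd_sub_recipeDrift_mul
      (fun j => (hA j).differentiable two_ne_zero w) (hp.differentiable two_ne_zero w)
  have diffusion_differentiable (j : ι) : DifferentiableAt ℝ (pd j fun u => p u * A u i j) z :=
    differentiableAt_pd j (hp.mul (hA j)).contDiffAt
  have drift_differentiable : DifferentiableAt ℝ (fun w => recipeDrift A H w i * p w) z :=
    (differentiableAt_recipeDrift (fun j => (hA j).contDiffAt) hH).mul
      (hp.differentiable two_ne_zero z)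
  rw [flux_eq, pd_sub k (DifferentiableAt.fun_sum fun j _ => diffusion_differentiable j)
    drift_differentiable, pd_sum k fun j _ => diffusion_differentiable j]

theorem sum_pd_recipeFlux (hA : ∀ i j, ContDiff ℝ 2 fun w => A w i j) (hH : ContDiffAt ℝ 2 H z)
    (hp : ContDiff ℝ 2 p) :
    ∑ i, pd i (fun w => recipeFlux A H p w i) z =
      doubleDivergence (fun w => p w • A w) z
        - ∑ i, pd i (fun w => recipeDrift A H w i * p w) z := by
  simp only [doubleDivergence, Matrix.smul_apply, smul_eq_mul, ← Finset.sum_sub_distrib]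
  exact Finset.sum_congr rfl fun i _ => pd_recipeFlux i (hA i) hH hp

end CompleteRecipe

theorem fokker_planck_compact_form_general {ι : Type*} [Fintype ι] [DecidableEq ι]
    (H : (ι → ℝ) → ℝ) (hH : ContDiff ℝ 2 H)
    (D Q : (ι → ℝ) → Matrix ι ι ℝ)
    (hD : ∀ i j, ContDiff ℝ 2 (fun z => D z i j))
    (hQ : ∀ i j, ContDiff ℝ 2 (fun z => Q z i j))
    (hQskew : ∀ z, (Q z)ᵀ = -Q z)
    (f : (ι → ℝ) → ι → ℝ)
    (hf : ∀ z i, f z i =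
      -∑ j, (D z i j + Q z i j) * pd j H z
        + ∑ j, pd j (fun w => D w i j + Q w i j) z)
    (p : (ι → ℝ) → ℝ) (hp : ContDiff ℝ 2 p) (z : ι → ℝ) :
    ∑ i, ∑ j, pd i (fun w => pd j (fun u => D u i j * p u) w) z
      - ∑ i, pd i (fun w => f w i * p w) z
    = ∑ i, pd i (fun w =>
        ∑ j, (D w i j + Q w i j) * (p w * pd j H w + pd j p w)) z := by
  have contDiff_entry {A : (ι → ℝ) → Matrix ι ι ℝ} (hA : ∀ i j, ContDiff ℝ 2 fun w => A w i j)
      (i j : ι) : ContDiff ℝ 2 fun w => (p w • A w) i j := hp.mul (hA i j)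
  have skew_term : doubleDivergence (fun w => p w • Q w) z = 0 :=
    doubleDivergence_eq_zero_of_transpose_eq_neg (fun i j => (contDiff_entry hQ i j).contDiffAt)
      fun w => by rw [transpose_smul, hQskew, smul_neg]
  have drift_eq : f = recipeDrift (fun w => D w + Q w) H := funext₂ hf
  calc
    _ = doubleDivergence (fun w => p w • D w) z - ∑ i, pd i (fun w => f w i * p w) z := by
      simp only [doubleDivergence, Matrix.smul_apply, smul_eq_mul, mul_comm (p _)]
    _ = doubleDivergence (fun w => p w • (D w + Q w)) z
          - ∑ i, pd i (fun w => recipeDrift (fun w => D w + Q w) H w i * p w) z := by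
      simp only [smul_add, doubleDivergence_add (contDiff_entry hD) (contDiff_entry hQ), skew_term,
        add_zero, drift_eq]
    _ = ∑ i, pd i (fun w => recipeFlux (fun w => D w + Q w) H p w i) z :=
      (sum_pd_recipeFlux (fun i j => (hD i j).add (hQ i j)) hH.contDiffAt hp).symm

/-- The Itô Fokker–Planck right-hand side for the complete-recipe drift equals
the compact divergence form. -/
theorem fokker_planck_compact_form {d : ℕ} (hd : 1 ≤ d)
    (H : (Fin d → ℝ) → ℝ) (hH : ContDiff ℝ (⊤ : ℕ∞) H)
    (D Q : (Fin d → ℝ) → Matrix (Fin d) (Fin d) ℝ)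
    (hD : ∀ i j, ContDiff ℝ (⊤ : ℕ∞) (fun z => D z i j))
    (hDsymm : ∀ z, (D z)ᵀ = D z)
    (hQ : ∀ i j, ContDiff ℝ (⊤ : ℕ∞) (fun z => Q z i j))
    (hQskew : ∀ z, (Q z)ᵀ = -Q z)
    (f : (Fin d → ℝ) → Fin d → ℝ)
    (hf : ∀ z i, f z i =
      -∑ j, (D z i j + Q z i j) * pd j H z
        + ∑ j, pd j (fun w => D w i j + Q w i j) z)
    (p : (Fin d → ℝ) → ℝ) (hp : ContDiff ℝ (⊤ : ℕ∞) p) (z : Fin d → ℝ) :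
    ∑ i, ∑ j, pd i (fun w => pd j (fun u => D u i j * p u) w) z
      - ∑ i, pd i (fun w => f w i * p w) z
    = ∑ i, pd i (fun w =>
        ∑ j, (D w i j + Q w i j) * (p w * pd j H w + pd j p w)) z :=
  fokker_planck_compact_form_general H (contDiff_infty.mp hH 2) D Q
    (fun i j => contDiff_infty.mp (hD i j) 2) (fun i j => contDiff_infty.mp (hQ i j) 2) hQskew
    f hf p (contDiff_infty.mp hp 2) z
end

section
/- Let d ≥ 1 and let F : ℝ^d → ℝ^d be a smooth vector field such that each component F_i is Lebesgue integrable on ℝ^d and F is divergence-free: ∑_{i=1}^d ∂F_i/∂z_i (z) = 0 for every z ∈ ℝ^d. Then there exists a smooth matrix-valued map A : ℝ^d → (d×d real matrices) with A(z) skew-symmetric (A_{ij}(z) = -A_{ji}(z)) for every z, such that F is the row-divergence of A: for every i and every z ∈ ℝ^d, F_i(z) = ∑_{j=1}^d ∂A_{ij}/∂z_j (z). -/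
open scoped BigOperators
open MeasureTheory

/-!
In dimension `d ≥ 2` this is the Poincaré lemma for `(d - 1)`-forms, solved by the cone
construction from the origin. The field `B z = ∫ t in 0..1, t ^ (d - 2) • F (t • z)` satisfies the
Euler equation `(d - 1) • B z + DB z z = F z` and inherits `div B = 0` from `F`, so the divergence
of the `i`-th row `B i • z - z i • B` of `A = B zᵀ - z Bᵀ` is
`(d - 1) * B i + DB z z i - z i * div B = F i`.

In dimension one a skew-symmetric matrix vanishes, and a divergence-free field is constant;
integrability then forces that constant to be zero.
-/

open Set Filter Topology intervalIntegral

theorem exists_eventually_forall_norm_le_of_isCompact {X Y G : Type*}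
    [TopologicalSpace X] [TopologicalSpace Y] [SeminormedAddCommGroup G] {f : X → Y → G}
    (hf : Continuous f.uncurry) {K : Set Y} (hK : IsCompact K) (x₀ : X) :
    ∃ C, ∀ᶠ x in 𝓝 x₀, ∀ y ∈ K, ‖f x y‖ ≤ C := by
  obtain ⟨C, hC⟩ := hK.exists_bound_of_continuousOn (f := f x₀)
    (hf.comp (Continuous.prodMk_right x₀)).continuousOn
  refine ⟨C + 1, hK.eventually_forall_of_forall_eventually fun y hy => ?_⟩
  have hlt : ‖f.uncurry (x₀, y)‖ < C + 1 := lt_add_of_le_of_pos (hC y hy) one_pos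
  exact (hf.norm.continuousAt.eventually_lt_const hlt).mono fun _ => le_of_lt

theorem hasFDerivAt_intervalIntegral_of_continuous {E G : Type*} [NormedAddCommGroup E]
    [NormedSpace ℝ E] [NormedAddCommGroup G] [NormedSpace ℝ G] {f : E → ℝ → G}
    {f' : E → ℝ → E →L[ℝ] G} {μ : Measure ℝ} [IsLocallyFiniteMeasure μ] (hf : ∀ x, Continuous (f x))
    (hf' : Continuous f'.uncurry) (hderiv : ∀ x t, HasFDerivAt (f · t) (f' x t) x)
    (a b : ℝ) (x₀ : E) :
    HasFDerivAt (fun x => ∫ t in a..b, f x t ∂μ) (∫ t in a..b, f' x₀ t ∂μ) x₀ := by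
  obtain ⟨C, hC⟩ :=
    exists_eventually_forall_norm_le_of_isCompact hf' (isCompact_uIcc (a := a) (b := b)) x₀
  exact hasFDerivAt_integral_of_dominated_of_fderiv_le (bound := fun _ => C) hC
    (.of_forall fun x => (hf x).aestronglyMeasurable) ((hf x₀).intervalIntegrable a b)
    (hf'.comp (Continuous.prodMk_right x₀)).aestronglyMeasurable
    (.of_forall fun t ht x hx => hx t (uIoc_subset_uIcc ht)) intervalIntegrable_const
    (.of_forall fun t _ x _ => hderiv x t)

section RadialAverage

variable {E G H : Type*} [NormedAddCommGroup E] [NormedSpace ℝ E]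
  [NormedAddCommGroup G] [NormedSpace ℝ G] [NormedAddCommGroup H] [NormedSpace ℝ H]

/-- The (not normalized) average of `g` along the segment from `0` to `x`, with weight `t ^ n`.
For `n = p - 1` it is the integral in the homotopy operator on `p`-forms in the Poincaré lemma. -/
noncomputable def radialAverage (n : ℕ) (g : E → G) (x : E) : G :=
  ∫ t in (0 : ℝ)..1, t ^ n • g (t • x)

theorem continuous_radialAverage (n : ℕ) {g : E → G} (hg : Continuous g) :
    Continuous (radialAverage n g) :=
  continuous_parametric_intervalIntegral_of_continuous' (by fun_prop) 0 1

theorem map_radialAverage [CompleteSpace G] [CompleteSpace H] (L : G →L[ℝ] H)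
    (n : ℕ) {g : E → G} (hg : Continuous g) (x : E) :
    L (radialAverage n g x) = radialAverage n (fun y => L (g y)) x := by
  have hInt : IntervalIntegrable (fun t : ℝ => t ^ n • g (t • x)) volume 0 1 :=
    Continuous.intervalIntegrable (by fun_prop) 0 1
  simp only [radialAverage, ← L.intervalIntegral_comp_comm hInt, map_smul]

theorem hasFDerivAt_radialAverage (n : ℕ) {g : E → G} (hg : ContDiff ℝ 1 g) (x : E) :
    HasFDerivAt (radialAverage n g) (radialAverage (n + 1) (fderiv ℝ g) x) x := by
  have hgc : Continuous g := hg.continuous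
  refine hasFDerivAt_intervalIntegral_of_continuous (f := fun y t => t ^ n • g (t • y))
    (f' := fun y t => t ^ (n + 1) • fderiv ℝ g (t • y)) (fun y => by fun_prop) (by fun_prop)
    (fun y t => ?_) 0 1 x
  have hscale : HasFDerivAt (fun y => g (t • y)) (t • fderiv ℝ g (t • y)) y := by
    simpa [Function.comp_def] using (hg.differentiable one_ne_zero (t • y)).hasFDerivAt.comp y
      ((hasFDerivAt_id y).fun_const_smul t)
  simpa only [pow_succ, mul_smul] using hscale.fun_const_smul (t ^ n)

theorem fderiv_radialAverage_apply [CompleteSpace G] (n : ℕ) {g : E → G} (hg : ContDiff ℝ 1 g)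
    (x v : E) :
    fderiv ℝ (radialAverage n g) x v = radialAverage (n + 1) (fun y => fderiv ℝ g y v) x := by
  rw [(hasFDerivAt_radialAverage n hg x).fderiv]
  exact map_radialAverage (.apply ℝ G v) (n + 1) (hg.continuous_fderiv one_ne_zero) x

theorem contDiff_radialAverage [FiniteDimensional ℝ E] [CompleteSpace G] {k : ℕ∞} (n : ℕ)
    {g : E → G} (hg : ContDiff ℝ k g) : ContDiff ℝ k (radialAverage n g) := by
  refine contDiff_iff_forall_nat_le.2 fun m hm => ?_
  replace hg : ContDiff ℝ m g := hg.of_le (mod_cast hm)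
  clear hm
  induction m generalizing n g with
  | zero => exact contDiff_zero.2 (continuous_radialAverage n hg.continuous)
  | succ m ih =>
    have hg₁ : ContDiff ℝ 1 g := hg.of_le (by simp)
    push_cast at hg ⊢
    refine contDiff_succ_iff_fderiv_apply.2
      ⟨fun x => (hasFDerivAt_radialAverage n hg₁ x).differentiableAt, by simp, fun v => ?_⟩
    simp only [fderiv_radialAverage_apply n hg₁]
    exact ih (n + 1) ((hg.fderiv_right le_rfl).clm_apply contDiff_const)

theorem hasDerivAt_pow_succ_smul_comp_smul (n : ℕ) {g : E → G} {t : ℝ} {x : E}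
    (hg : DifferentiableAt ℝ g (t • x)) :
    HasDerivAt (fun s : ℝ => s ^ (n + 1) • g (s • x))
      ((n + 1 : ℝ) • t ^ n • g (t • x) + t ^ (n + 1) • fderiv ℝ g (t • x) x) t := by
  have hray : HasDerivAt (fun s : ℝ => g (s • x)) (fderiv ℝ g (t • x) x) t := by
    simpa [Function.comp_def] using
      hg.hasFDerivAt.comp_hasDerivAt t ((hasDerivAt_id t).smul_const x)
  convert (hasDerivAt_pow (n + 1) t).fun_smul hray using 1
  push_cast
  rw [mul_smul, add_comm]

theorem succ_smul_radialAverage_add_fderiv_apply_self [CompleteSpace G] (n : ℕ) {g : E → G}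
    (hg : ContDiff ℝ 1 g) (x : E) :
    (n + 1 : ℝ) • radialAverage n g x + fderiv ℝ (radialAverage n g) x x = g x := by
  have hgc : Continuous g := hg.continuous
  calc (n + 1 : ℝ) • radialAverage n g x + fderiv ℝ (radialAverage n g) x x
      = (n + 1 : ℝ) • radialAverage n g x
          + radialAverage (n + 1) (fun y => fderiv ℝ g y x) x := by
        rw [fderiv_radialAverage_apply n hg]
    _ = ∫ t in (0 : ℝ)..1, ((n + 1 : ℝ) • t ^ n • g (t • x)
          + t ^ (n + 1) • fderiv ℝ g (t • x) x) := by
        rw [intervalIntegral.integral_add (Continuous.intervalIntegrable (by fun_prop) 0 1)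
          (Continuous.intervalIntegrable (by fun_prop) 0 1), intervalIntegral.integral_smul]
        rfl
    _ = g x := by
        rw [integral_eq_sub_of_hasDerivAt (fun t _ =>
          hasDerivAt_pow_succ_smul_comp_smul n (hg.differentiable one_ne_zero (t • x)))
          (Continuous.intervalIntegrable (by fun_prop) 0 1)]
        simp

end RadialAverage

section Divergence

variable {ι : Type*} [Fintype ι] [DecidableEq ι] {F G : (ι → ℝ) → ι → ℝ} {g : (ι → ℝ) → ℝ}
  {z : ι → ℝ}

/-- The divergence of a vector field on `ℝ^ι`, as the sum of its diagonal classical partial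
derivatives. -/
noncomputable def divergence (F : (ι → ℝ) → ι → ℝ) (z : ι → ℝ) : ℝ :=
  ∑ i, pd i (fun w => F w i) z

theorem divergence_eq_sum_fderiv_apply (hF : DifferentiableAt ℝ F z) :
    divergence F z = ∑ i, fderiv ℝ F z (Pi.single i 1) i := by
  simp only [divergence, pd, fderiv_apply hF]
  rfl

theorem divergence_id : divergence (fun w : ι → ℝ => w) z = Fintype.card ι := by
  simp [divergence_eq_sum_fderiv_apply differentiableAt_fun_id]

theorem divergence_sub (hF : DifferentiableAt ℝ F z) (hG : DifferentiableAt ℝ G z) :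
    divergence (fun w => F w - G w) z = divergence F z - divergence G z := by
  simp [divergence_eq_sum_fderiv_apply, hF, hG, hF.fun_sub hG, fderiv_fun_sub]

theorem divergence_smul (hg : DifferentiableAt ℝ g z) (hF : DifferentiableAt ℝ F z) :
    divergence (fun w => g w • F w) z = g z * divergence F z + fderiv ℝ g z (F z) := by
  have hgrad : fderiv ℝ g z (F z) = ∑ i, F z i * fderiv ℝ g z (Pi.single i 1) := by
    simp only [← smul_eq_mul, ← map_smul, ← map_sum, ← Pi.single_smul]
    simp only [smul_eq_mul, mul_one, Finset.univ_sum_single]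
  simp [divergence_eq_sum_fderiv_apply, hF, hg.fun_smul hF, fderiv_fun_smul hg hF, hgrad,
    Finset.sum_add_distrib, Finset.mul_sum, mul_comm]

theorem divergence_smul_self_sub_apply_smul (hF : DifferentiableAt ℝ F z) (i : ι) :
    divergence (fun w => F w i • w - w i • F w) z =
      (Fintype.card ι - 1) * F z i + fderiv ℝ F z z i - z i * divergence F z := by
  have hFi : DifferentiableAt ℝ (fun w => F w i) z := differentiableAt_pi.1 hF i
  have hproj : HasFDerivAt (fun w : ι → ℝ => w i) (.proj (R := ℝ) i) z :=
    hasFDerivAt_apply i z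
  rw [divergence_sub (by fun_prop) (by fun_prop),
    divergence_smul hFi differentiableAt_fun_id, divergence_smul hproj.differentiableAt hF,
    divergence_id, fderiv_apply hF, hproj.fderiv]
  simp only [ContinuousLinearMap.comp_apply, ContinuousLinearMap.proj_apply]
  ring

theorem divergence_radialAverage (n : ℕ) (hF : ContDiff ℝ 1 F) (z : ι → ℝ) :
    divergence (radialAverage n F) z = radialAverage (n + 1) (divergence F) z := by
  let tr : ((ι → ℝ) →L[ℝ] ι → ℝ) →L[ℝ] ℝ := ∑ i, (.proj i) ∘L (.apply ℝ (ι → ℝ) (Pi.single i 1))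
  have htr (L : (ι → ℝ) →L[ℝ] ι → ℝ) : tr L = ∑ i, L (Pi.single i 1) i := by simp [tr]
  have hdiv : divergence F = fun w => tr (fderiv ℝ F w) := funext fun w => by
    rw [htr, divergence_eq_sum_fderiv_apply (hF.differentiable one_ne_zero w)]
  have hB := hasFDerivAt_radialAverage n hF z
  rw [divergence_eq_sum_fderiv_apply hB.differentiableAt, ← htr, hB.fderiv, hdiv]
  exact map_radialAverage tr (n + 1) (hF.continuous_fderiv one_ne_zero) z

theorem eq_of_divergence_eq_zero_of_subsingleton [Subsingleton ι] (hF : Differentiable ℝ F)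
    (hdiv : ∀ z, divergence F z = 0) (x y : ι → ℝ) : F x = F y := by
  refine is_const_of_fderiv_eq_zero hF (fun z => ?_) x y
  ext v i
  have hv : v = v i • Pi.single i 1 := funext fun j => by
    simp [Subsingleton.elim j i]
  have hi : fderiv ℝ F z (Pi.single i 1) i = 0 := by
    simpa [divergence_eq_sum_fderiv_apply (hF z), Fintype.sum_subsingleton _ i] using hdiv z
  rw [hv, map_smul, Pi.smul_apply, hi, smul_zero]
  rfl

theorem eq_zero_of_divergence_eq_zero_of_integrable [Unique ι] (hF : Differentiable ℝ F)
    (hdiv : ∀ z, divergence F z = 0) (hInt : ∀ i, Integrable (fun z => F z i)) : F = 0 := by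
  ext z i
  have hconst : (fun w => F w i) = fun _ => F z i := funext fun w =>
    congrFun (eq_of_divergence_eq_zero_of_subsingleton hF hdiv w z) i
  have hzero := hInt i
  rw [hconst, integrable_const_iff] at hzero
  simpa [isFiniteMeasure_iff] using hzero

end Divergence

section Potential

variable {ι : Type*} [Fintype ι] {F : (ι → ℝ) → ι → ℝ}

/-- The skew-symmetric potential `B zᵀ - z Bᵀ` of a divergence-free field `F` on `ℝ^ι`, where `B` is
the radial average of `F` with exponent `card ι - 2`. The truncated subtraction makes it meaningless
when `card ι = 1`. -/
noncomputable def radialPotential (F : (ι → ℝ) → ι → ℝ) (z : ι → ℝ) : Matrix ι ι ℝ :=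
  Matrix.vecMulVec (radialAverage (Fintype.card ι - 2) F z) z -
    Matrix.vecMulVec z (radialAverage (Fintype.card ι - 2) F z)

theorem contDiff_radialPotential_apply {k : ℕ∞} (hF : ContDiff ℝ k F) (i j : ι) :
    ContDiff ℝ k (fun z => radialPotential F z i j) := by
  have hB := contDiff_pi.1 (contDiff_radialAverage (Fintype.card ι - 2) hF)
  exact ((hB i).mul (contDiff_apply ℝ ℝ j)).sub ((contDiff_apply ℝ ℝ i).mul (hB j))

theorem radialPotential_apply_eq_neg (F : (ι → ℝ) → ι → ℝ) (z : ι → ℝ) (i j : ι) :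
    radialPotential F z i j = -radialPotential F z j i := by
  simp [radialPotential, Matrix.vecMulVec_apply, mul_comm]

variable [DecidableEq ι]

theorem divergence_radialPotential_row (hF : ContDiff ℝ 1 F) (hdiv : ∀ z, divergence F z = 0)
    (hcard : Fintype.card ι ≠ 1) (i : ι) (z : ι → ℝ) :
    divergence (fun w => radialPotential F w i) z = F z i := by
  obtain ⟨n, hn⟩ : ∃ n, Fintype.card ι = n + 2 :=
    Nat.exists_eq_add_of_le' (by have := Fintype.card_pos_iff.2 ⟨i⟩; omega)
  have hrow : (fun w => radialPotential F w i) =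
      fun w => radialAverage n F w i • w - w i • radialAverage n F w := by
    simp only [radialPotential, hn]
    rfl
  have hdivB : divergence (radialAverage n F) z = 0 := by
    simp [divergence_radialAverage n hF, funext hdiv, radialAverage]
  have heuler := congrFun (succ_smul_radialAverage_add_fderiv_apply_self n hF z) i
  rw [hrow, divergence_smul_self_sub_apply_smul
    (hasFDerivAt_radialAverage n hF z).differentiableAt, hdivB, ← heuler, hn]
  simp only [Pi.add_apply, Pi.smul_apply, smul_eq_mul]
  push_cast
  ring

theorem divergence_free_eq_div_of_skew_general {k : ℕ∞} (hk : k ≠ 0)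
    (hF : ∀ i, ContDiff ℝ k (fun z => F z i))
    (hInt : Fintype.card ι = 1 → ∀ i, Integrable (fun z => F z i))
    (hdiv : ∀ z, ∑ i, pd i (fun w => F w i) z = 0) :
    ∃ A : (ι → ℝ) → Matrix ι ι ℝ,
      (∀ i j, ContDiff ℝ k (fun z => A z i j)) ∧
      (∀ z i j, A z i j = -A z j i) ∧
      (∀ i z, F z i = ∑ j, pd j (fun w => A w i j) z) := by
  have hFk : ContDiff ℝ k F := contDiff_pi.2 hF
  have hF₁ : ContDiff ℝ 1 F := hFk.of_le (mod_cast Order.one_le_iff_ne_zero.2 hk)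
  by_cases hcard : Fintype.card ι = 1
  · obtain ⟨_⟩ := Fintype.card_eq_one_iff_nonempty_unique.1 hcard
    obtain rfl := eq_zero_of_divergence_eq_zero_of_integrable
      (hF₁.differentiable one_ne_zero) hdiv (hInt hcard)
    exact ⟨0, fun _ _ => contDiff_const, by simp, by simp [pd]⟩
  · exact ⟨radialPotential F, contDiff_radialPotential_apply hFk, radialPotential_apply_eq_neg F,
      fun i z => (divergence_radialPotential_row hF₁ hdiv hcard i z).symm⟩

end Potential

/-- An integrable smooth divergence-free vector field on ℝ^d is the row-divergence
of a smooth skew-symmetric matrix-valued potential. -/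
theorem divergence_free_eq_div_of_skew {d : ℕ} (hd : 1 ≤ d)
    (F : (Fin d → ℝ) → Fin d → ℝ)
    (hF : ∀ i, ContDiff ℝ (⊤ : ℕ∞) (fun z => F z i))
    (hInt : ∀ i, Integrable (fun z => F z i) (volume : Measure (Fin d → ℝ)))
    (hdiv : ∀ z : Fin d → ℝ, ∑ i, pd i (fun w => F w i) z = 0) :
    ∃ A : (Fin d → ℝ) → Matrix (Fin d) (Fin d) ℝ,
      (∀ i j, ContDiff ℝ (⊤ : ℕ∞) (fun z => A z i j)) ∧
      (∀ z i j, A z i j = -A z j i) ∧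
      (∀ i (z : Fin d → ℝ), F z i = ∑ j, pd j (fun w => A w i j) z) :=
  divergence_free_eq_div_of_skew_general ENat.top_ne_zero hF (fun _ => hInt) hdiv
end

section
/- Let d ≥ 1, let U : ℝ^d → ℝ be smooth, and let G : ℝ^d → (d×d real matrices) be smooth with G(θ) symmetric positive definite for every θ; write G(θ)⁻¹ for its inverse (which is a smooth matrix-valued function of θ). Define the Riemannian Langevin drift f_i(θ) = -∑_{j=1}^d (G(θ)⁻¹)_{ij} ∂U/∂θ_j(θ) + ∑_{j=1}^d ∂/∂θ_j (G(θ)⁻¹)_{ij}. Then e^{-U} is a stationary solution of the Fokker–Planck equation with diffusion matrix D = G⁻¹: for every θ ∈ ℝ^d, ∑_{i,j=1}^d ∂²/∂θ_i∂θ_j [(G(θ)⁻¹)_{ij} e^{-U(θ)}] - ∑_{i=1}^d ∂/∂θ_i [f_i(θ) e^{-U(θ)}] = 0. -/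
open scoped BigOperators
open Matrix

/-!
With `p = e^{-U}`, the product rule gives `∂_j (D_{ij} p) = (∂_j D_{ij} - D_{ij} ∂_j U) p`. Summing
over `j`, the drift with the correction `∑_j ∂_j D_{ij}` is exactly the one for which the
probability current `f_i p - ∑_j ∂_j (D_{ij} p)` vanishes identically. The right-hand side of the
Fokker–Planck equation is minus the divergence of this current, so `p` is stationary. For
`D = G⁻¹`, smoothness of `D` comes from Cramer's rule.
-/

section MatrixInverse

variable {𝕜 E n : Type*} [NontriviallyNormedField 𝕜] [NormedAddCommGroup E] [NormedSpace 𝕜 E]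
  [Fintype n] [DecidableEq n] {k : WithTop ℕ∞}

theorem contDiff_matrix_det {R : Type*} [NormedCommRing R] [NormedAlgebra 𝕜 R]
    {A : E → Matrix n n R} (hA : ∀ i j, ContDiff 𝕜 k fun x => A x i j) :
    ContDiff 𝕜 k fun x => (A x).det := by
  simp only [det_apply']
  exact ContDiff.sum fun σ _ => contDiff_const.mul (contDiff_prod fun i _ => hA (σ i) i)

theorem contDiff_matrix_adjugate_apply {R : Type*} [NormedCommRing R] [NormedAlgebra 𝕜 R]
    {A : E → Matrix n n R} (hA : ∀ i j, ContDiff 𝕜 k fun x => A x i j) (i j : n) :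
    ContDiff 𝕜 k fun x => (A x).adjugate i j := by
  simp only [adjugate_apply]
  refine contDiff_matrix_det fun r c => ?_
  obtain rfl | hr := eq_or_ne r j
  · simpa only [updateRow_self] using contDiff_const
  · simpa only [updateRow_ne hr] using hA r c

theorem contDiff_matrix_inv_apply {K : Type*} [NormedField K] [NormedAlgebra 𝕜 K]
    {A : E → Matrix n n K} (hA : ∀ i j, ContDiff 𝕜 k fun x => A x i j)
    (hdet : ∀ x, (A x).det ≠ 0) (i j : n) :
    ContDiff 𝕜 k fun x => (A x)⁻¹ i j := by
  simp only [inv_def, Matrix.smul_apply, smul_eq_mul, Ring.inverse_eq_inv']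
  exact ((contDiff_matrix_det hA).inv hdet).mul (contDiff_matrix_adjugate_apply hA i j)

end MatrixInverse

section FokkerPlanck

variable {ι : Type*} [Fintype ι] [DecidableEq ι]

theorem pd_fun_sum {κ : Type*} {s : Finset κ} {g : κ → (ι → ℝ) → ℝ} {z : ι → ℝ}
    (hg : ∀ k ∈ s, DifferentiableAt ℝ (g k) z) (i : ι) :
    pd i (fun w => ∑ k ∈ s, g k w) z = ∑ k ∈ s, pd i (g k) z := by
  simp only [pd, fderiv_fun_sum hg, _root_.sum_apply]

theorem pd_mul_exp_neg {a U : (ι → ℝ) → ℝ} {z : ι → ℝ} (ha : DifferentiableAt ℝ a z)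
    (hU : DifferentiableAt ℝ U z) (i : ι) :
    pd i (fun w => a w * Real.exp (-U w)) z
      = (pd i a z - a z * pd i U z) * Real.exp (-U z) := by
  have hderiv := (ha.hasFDerivAt.fun_mul hU.hasFDerivAt.fun_neg.exp).fderiv
  simp only [pd, hderiv, _root_.add_apply, _root_.smul_apply, _root_.neg_apply, smul_eq_mul]
  ring

theorem contDiff_pd {m n : WithTop ℕ∞} {g : (ι → ℝ) → ℝ} (hg : ContDiff ℝ n g)
    (hmn : m + 1 ≤ n) (i : ι) : ContDiff ℝ m (pd i g) :=
  (hg.fderiv_right hmn).clm_apply contDiff_const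

/-- The right-hand side `∑ i j, ∂_i ∂_j (D_{ij} p) - ∑ i, ∂_i (f_i p)` of the Fokker–Planck equation
with diffusion matrix `D`, drift `f` and density `p`. -/
noncomputable def fokkerPlanck (D : (ι → ℝ) → Matrix ι ι ℝ) (f : (ι → ℝ) → ι → ℝ)
    (p : (ι → ℝ) → ℝ) (θ : ι → ℝ) : ℝ :=
  ∑ i, ∑ j, pd i (fun w => pd j (fun u => D u i j * p u) w) θ - ∑ i, pd i (fun w => f w i * p w) θ

/-- The probability current `J_i = f_i p - ∑ j, ∂_j (D_{ij} p)`, whose divergence is minus the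
right-hand side of the Fokker–Planck equation. -/
noncomputable def probabilityCurrent (D : (ι → ℝ) → Matrix ι ι ℝ) (f : (ι → ℝ) → ι → ℝ)
    (p : (ι → ℝ) → ℝ) (θ : ι → ℝ) (i : ι) : ℝ :=
  f θ i * p θ - ∑ j, pd j (fun w => D w i j * p w) θ

/-- The drift `f_i = -∑ j, D_{ij} ∂_j U + ∑ j, ∂_j D_{ij}` of Riemannian Langevin dynamics with
potential `U`, written in terms of the diffusion matrix `D` (the inverse of the metric `G`). -/
noncomputable def langevinDrift (D : (ι → ℝ) → Matrix ι ι ℝ) (U : (ι → ℝ) → ℝ) (θ : ι → ℝ)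
    (i : ι) : ℝ :=
  -∑ j, D θ i j * pd j U θ + ∑ j, pd j (fun w => D w i j) θ

variable {D : (ι → ℝ) → Matrix ι ι ℝ}

theorem fokkerPlanck_eq_zero_of_probabilityCurrent_eq_zero {f : (ι → ℝ) → ι → ℝ}
    {p : (ι → ℝ) → ℝ} (hD : ∀ i j, ContDiff ℝ 2 fun w => D w i j) (hp : ContDiff ℝ 2 p)
    (hJ : ∀ w i, probabilityCurrent D f p w i = 0) (θ : ι → ℝ) :
    fokkerPlanck D f p θ = 0 := by
  have hflux (i : ι) : (fun w => f w i * p w)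
      = fun w => ∑ j, pd j (fun u => D u i j * p u) w :=
    funext fun w => sub_eq_zero.mp (hJ w i)
  have hdiff (i j : ι) : DifferentiableAt ℝ (pd j fun u => D u i j * p u) θ :=
    (contDiff_pd ((hD i j).mul hp) one_add_one_eq_two.le j).differentiable one_ne_zero θ
  rw [fokkerPlanck, sub_eq_zero]
  refine Finset.sum_congr rfl fun i _ => ?_
  rw [hflux i, pd_fun_sum fun j _ => hdiff i j]

theorem probabilityCurrent_langevinDrift_eq_zero {U : (ι → ℝ) → ℝ} {θ : ι → ℝ} {i : ι}
    (hD : ∀ j, DifferentiableAt ℝ (fun w => D w i j) θ) (hU : DifferentiableAt ℝ U θ) :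
    probabilityCurrent D (langevinDrift D U) (fun w => Real.exp (-U w)) θ i = 0 := by
  have hflux (j : ι) : pd j (fun w => D w i j * Real.exp (-U w)) θ
      = (pd j (fun w => D w i j) θ - D θ i j * pd j U θ) * Real.exp (-U θ) :=
    pd_mul_exp_neg (hD j) hU j
  simp only [probabilityCurrent, langevinDrift, hflux, ← Finset.sum_mul, Finset.sum_sub_distrib]
  ring

theorem riemannian_langevin_stationary_general {U : (ι → ℝ) → ℝ}
    (hD : ∀ i j, ContDiff ℝ 2 fun w => D w i j) (hU : ContDiff ℝ 2 U) (θ : ι → ℝ) :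
    fokkerPlanck D (langevinDrift D U) (fun w => Real.exp (-U w)) θ = 0 :=
  fokkerPlanck_eq_zero_of_probabilityCurrent_eq_zero hD hU.neg.exp
    (fun w i => probabilityCurrent_langevinDrift_eq_zero
      (fun j => (hD i j).differentiable two_ne_zero w) (hU.differentiable two_ne_zero w)) θ

end FokkerPlanck

/-- `e^{-U}` is a stationary solution of the Fokker–Planck equation for Riemannian
Langevin dynamics with diffusion matrix `D = G⁻¹` and the Lebesgue-measure
correction term `Γ_i = ∑_j ∂_j (G⁻¹)_{ij}`. -/
theorem riemannian_langevin_stationary {d : ℕ} (hd : 1 ≤ d)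
    (U : (Fin d → ℝ) → ℝ) (hU : ContDiff ℝ (⊤ : ℕ∞) U)
    (G : (Fin d → ℝ) → Matrix (Fin d) (Fin d) ℝ)
    (hG : ∀ i j, ContDiff ℝ (⊤ : ℕ∞) (fun θ => G θ i j))
    (hGpd : ∀ θ, (G θ).PosDef)
    (f : (Fin d → ℝ) → Fin d → ℝ)
    (hf : ∀ θ i, f θ i =
      -∑ j, (G θ)⁻¹ i j * pd j U θ
        + ∑ j, pd j (fun w => (G w)⁻¹ i j) θ)
    (θ : Fin d → ℝ) :
    ∑ i, ∑ j, pd i (fun w => pd j (fun u => (G u)⁻¹ i j * Real.exp (-U u)) w) θ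
      - ∑ i, pd i (fun w => f w i * Real.exp (-U w)) θ = 0 := by
  have hle : (2 : WithTop ℕ∞) ≤ (⊤ : ℕ∞) := ENat.LEInfty.out
  have hD : ∀ i j, ContDiff ℝ 2 fun w => (G w)⁻¹ i j :=
    contDiff_matrix_inv_apply (fun i j => (hG i j).of_le hle) fun w => (hGpd w).det_pos.ne'
  obtain rfl : f = langevinDrift (fun w => (G w)⁻¹) U := funext₂ hf
  exact riemannian_langevin_stationary_general hD (hU.of_le hle) θ
end
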